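/- Let X be a real inner product space of dimension 2n, J : X → X a linear isometry with J ∘ J = −id, and V ⊆ X a co-isotropic subspace of dimension d. Then the image K_V(V) of the map K_V : V → V, K_V(v) = Π_V(J v), has dimension 2(d − n), and V^ω has dimension 2n − d. -/

import Mathlib

/-- The symplectic complement `V^ω = {ξ : ∀ v ∈ V, ω(ξ,v) = 0}` of a subspace `V`
of a real inner product space with compatible complex structure `J`, where
`ω(u,v) = ⟪u, J v⟫`. -/
def sympComp {X : Type*} [NormedAddCommGroup X] [InnerProductSpace ℝ X]
    (J : X →ₗ[ℝ] X) (V : Submodule ℝ X) : Submodule ℝ X where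
  carrier := {ξ : X | ∀ v ∈ V, (inner ℝ ξ (J v) : ℝ) = 0}
  zero_mem' := by intro v hv; simp
  add_mem' := by
    intro a b ha hb v hv
    rw [inner_add_left, ha v hv, hb v hv, add_zero]
  smul_mem' := by
    intro c a ha v hv
    rw [real_inner_smul_left, ha v hv, mul_zero]

/-- The map `K_V = Π_V ∘ J`, viewed as an endomorphism of the ambient space
(`Π_V` is the orthogonal projection onto `V`). -/
noncomputable def KV {X : Type*} [NormedAddCommGroup X] [InnerProductSpace ℝ X]
    [FiniteDimensional ℝ X] (J : X →ₗ[ℝ] X) (V : Submodule ℝ X) : X →ₗ[ℝ] X :=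
  V.subtype ∘ₗ (Submodule.orthogonalProjectionOnto V).toLinearMap ∘ₗ J

/-! For `x ∈ V`, the vector `x` is orthogonal to `J v` if and only if it is orthogonal to
`Π_V (J v)`. Hence `V^ω ∩ V`, which is `V^ω` for co-isotropic `V`, is the orthogonal complement of
`K_V(V)` inside `V`, so `dim K_V(V) = dim V - dim V^ω`. On the other hand `V^ω = (J V)ᗮ` has
dimension `dim X - dim V`, since `J` is injective. -/

section

open Module

lemma finrank_map_of_injOn {K M N : Type*} [Semiring K] [AddCommMonoid M] [Module K M]
    [AddCommMonoid N] [Module K N] {f : M →ₗ[K] N} {V : Submodule K M} (hf : Set.InjOn f V) :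
    finrank K (V.map f) = finrank K V := by
  rw [← LinearMap.range_domRestrict]
  exact LinearMap.finrank_range_of_inj hf.injective

lemma orthogonal_map_starProjection_inf {𝕜 E : Type*} [RCLike 𝕜] [NormedAddCommGroup E]
    [InnerProductSpace 𝕜 E] (V W : Submodule 𝕜 E) [V.HasOrthogonalProjection] :
    (W.map V.starProjection.toLinearMap)ᗮ ⊓ V = Wᗮ ⊓ V := by
  ext x
  simp only [Submodule.mem_inf, Submodule.mem_orthogonal, Submodule.mem_map,
    forall_exists_index, and_imp, forall_apply_eq_imp_iff₂, and_congr_left_iff]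
  intro hx
  refine forall₂_congr fun w _ ↦ ?_
  rw [ContinuousLinearMap.coe_coe, V.inner_starProjection_left_eq_right,
    Submodule.starProjection_eq_self_iff.mpr hx]

variable {X : Type*} [NormedAddCommGroup X] [InnerProductSpace ℝ X]

lemma sympComp_eq_orthogonal_map (J : X →ₗ[ℝ] X) (V : Submodule ℝ X) :
    sympComp J V = (V.map J)ᗮ := by
  ext ξ
  simp [sympComp, Submodule.mem_orthogonal']

variable [FiniteDimensional ℝ X]

lemma finrank_add_finrank_sympComp {J : X →ₗ[ℝ] X} {V : Submodule ℝ X} (hJ : Set.InjOn J V) :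
    finrank ℝ V + finrank ℝ (sympComp J V) = finrank ℝ X := by
  rw [sympComp_eq_orthogonal_map, ← finrank_map_of_injOn hJ]
  exact (V.map J).finrank_add_finrank_orthogonal

lemma map_KV_le (J : X →ₗ[ℝ] X) (V W : Submodule ℝ X) : W.map (KV J V) ≤ V := by
  rintro _ ⟨w, _, rfl⟩
  exact V.starProjection_apply_mem (J w)

lemma orthogonal_map_KV_inf (J : X →ₗ[ℝ] X) (V : Submodule ℝ X) :
    (V.map (KV J V))ᗮ ⊓ V = sympComp J V ⊓ V := by
  have hKV : KV J V = V.starProjection.toLinearMap ∘ₗ J := rfl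
  rw [hKV, Submodule.map_comp, orthogonal_map_starProjection_inf, sympComp_eq_orthogonal_map]

lemma finrank_map_KV_add_finrank_sympComp_inf (J : X →ₗ[ℝ] X) (V : Submodule ℝ X) :
    finrank ℝ (V.map (KV J V)) + finrank ℝ (sympComp J V ⊓ V : Submodule ℝ X) =
      finrank ℝ V := by
  rw [← orthogonal_map_KV_inf]
  exact Submodule.finrank_add_inf_finrank_orthogonal (map_KV_le J V V)

theorem coisotropic_dimensions_general {J : X →ₗ[ℝ] X} {V : Submodule ℝ X}
    (hJ : Set.InjOn J V) (hco : sympComp J V ≤ V) :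
    finrank ℝ (V.map (KV J V)) + finrank ℝ X = 2 * finrank ℝ V ∧
    finrank ℝ V + finrank ℝ (sympComp J V) = finrank ℝ X := by
  have hcomp := finrank_add_finrank_sympComp hJ
  have himage := finrank_map_KV_add_finrank_sympComp_inf J V
  rw [inf_eq_left.mpr hco] at himage
  exact ⟨by lia, hcomp⟩

end

/-- **Dimension count in the co-isotropic case.** If `X` has dimension `2n` and
`V` is a co-isotropic subspace of dimension `d`, then the image of
`K_V = Π_V ∘ J|_V` has dimension `2(d − n)` and `V^ω` has dimension `2n − d`. -/
theorem coisotropic_dimensions {X : Type*} [NormedAddCommGroup X]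
    [InnerProductSpace ℝ X] [FiniteDimensional ℝ X] (n d : ℕ)
    (hX : Module.finrank ℝ X = 2 * n)
    (J : X →ₗ[ℝ] X) (hJiso : ∀ x, ‖J x‖ = ‖x‖) (hJ2 : ∀ x, J (J x) = -x)
    (V : Submodule ℝ X) (hV : Module.finrank ℝ V = d)
    (hco : sympComp J V ≤ V) :
    Module.finrank ℝ (Submodule.map (KV J V) V) = 2 * (d - n) ∧
    Module.finrank ℝ (sympComp J V) = 2 * n - d := by
  have := coisotropic_dimensions_general (LinearIsometry.mk J hJiso).injective.injOn hco
  lia
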